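/- For all positive integers r, s, n, the number of r×s partial Latin rectangles based on n symbols of size 6 satisfies 720·|R_{r,s,n:6}| = rsn·(σ(5,5,5) − 15σ(5,4,4) + 30σ(4,4,4) + 85σ(5,3,3) + 210σ(4,4,3) − 420σ(4,3,3) − 225σ(5,2,2) − 1065σ(4,3,2) − 2150σ(3,3,3) + 2130σ(4,2,2) + 5310σ(3,3,2) + 274σ(5,1,1) + 2310σ(4,2,1) + 4400σ(3,3,1) + 4800σ(3,2,2) − 4620σ(4,1,1) − 22170σ(3,2,1) − 49500σ(2,2,2) − 120σ(5,0,0) − 1800σ(4,1,0) − 6000σ(3,2,0) + 10460σ(3,1,1) + 34980σ(2,2,1) + 3600σ(4,0,0) + 30600σ(3,1,0) + 58440σ(2,2,0) + 88710σ(2,1,1) − 34800σ(3,0,0) − 165480σ(2,1,0) − 364268σ(1,1,1) + 140040σ(2,0,0) + 344520σ(1,1,0) − 240720σ(1,0,0) + 146400). -/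

import Mathlib

open Finset

/-- `E` is (the entry set of) an `r × s` partial Latin rectangle based on `n` symbols:
no two distinct triples agree in both their first and second coordinates, in both their
first and third coordinates, or in both their second and third coordinates. -/
def IsPLR {r s n : ℕ} (E : Finset (Fin r × Fin s × Fin n)) : Prop :=
  ∀ e ∈ E, ∀ e' ∈ E, e ≠ e' →
    ¬(e.1 = e'.1 ∧ e.2.1 = e'.2.1) ∧
    ¬(e.1 = e'.1 ∧ e.2.2 = e'.2.2) ∧
    ¬(e.2.1 = e'.2.1 ∧ e.2.2 = e'.2.2)

/-- The number of entries of `E` in row `i`. -/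
def rowType {r s n : ℕ} (E : Finset (Fin r × Fin s × Fin n)) (i : Fin r) : ℕ :=
  (E.filter (fun e => e.1 = i)).card

/-- The number of entries of `E` in column `j`. -/
def colType {r s n : ℕ} (E : Finset (Fin r × Fin s × Fin n)) (j : Fin s) : ℕ :=
  (E.filter (fun e => e.2.1 = j)).card

/-- The number of occurrences of symbol `k` in `E`. -/
def symType {r s n : ℕ} (E : Finset (Fin r × Fin s × Fin n)) (k : Fin n) : ℕ :=
  (E.filter (fun e => e.2.2 = k)).card

/-- The number of `r × s` partial Latin rectangles based on `n` symbols of size `m`. -/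
noncomputable def numPLR (r s n m : ℕ) : ℕ :=
  Nat.card {E : Finset (Fin r × Fin s × Fin n) // IsPLR E ∧ E.card = m}

/-- `sig r s n a b c` is the sum of the distinct monomials `r^a' * s^b' * n^c'` as
`(a',b',c')` ranges over the distinct permutations of `(a,b,c)`. -/
def sig (r s n : ℤ) (a b c : ℕ) : ℤ :=
  ∑ p ∈ ({(a, b, c), (a, c, b), (b, a, c), (b, c, a), (c, a, b), (c, b, a)} :
      Finset (ℕ × ℕ × ℕ)),
    r ^ p.1 * s ^ p.2.1 * n ^ p.2.2

/-! ### Restricted growth encodings -/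

/-- Restricted growth words of length `m` starting with `k` known letters, together
with the final number of letters. -/
def Wd : ℕ → ℕ → List (List ℕ × ℕ)
  | 0, k => [([], k)]
  | m + 1, k =>
    (List.range k).flatMap (fun j => (Wd m k).map (fun p => (j :: p.1, p.2)))
      ++ (Wd m (k + 1)).map (fun p => (k :: p.1, p.2))

/-- Encode a list by the order of first occurrence, with `vs` the letters already seen. -/
def enc {α : Type} [DecidableEq α] : List α → List α → List ℕ
  | _, [] => []
  | vs, x :: l =>
    if x ∈ vs then vs.idxOf x :: enc vs l else vs.length :: enc (vs ++ [x]) l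

theorem Wd_le (m : ℕ) : ∀ k, ∀ p ∈ Wd m k, k ≤ p.2 := by
  induction m with
  | zero => intro k p hp; simp [Wd] at hp; simp [hp]
  | succ m ih =>
    intro k p hp
    simp only [Wd, List.mem_append, List.mem_flatMap, List.mem_map] at hp
    rcases hp with ⟨j, _, q, hq, rfl⟩ | ⟨q, hq, rfl⟩
    · exact ih k q hq
    · have := ih (k + 1) q hq
      simp only; omega

theorem Wd_le' (m : ℕ) : ∀ k, ∀ p ∈ Wd m k, p.2 ≤ k + m := by
  induction m with
  | zero => intro k p hp; simp [Wd] at hp; simp [hp]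
  | succ m ih =>
    intro k p hp
    simp only [Wd, List.mem_append, List.mem_flatMap, List.mem_map] at hp
    rcases hp with ⟨j, _, q, hq, rfl⟩ | ⟨q, hq, rfl⟩
    · have := ih k q hq
      simp only; omega
    · have := ih (k + 1) q hq
      simp only; omega

theorem sum_fun_succ {α : Type} [Fintype α] (m : ℕ) (F : (Fin (m + 1) → α) → ℤ) :
    ∑ f, F f = ∑ x : α, ∑ f : Fin m → α, F (Fin.cons x f) := by
  rw [← (Fin.consEquiv (fun _ : Fin (m + 1) => α)).sum_comp, Fintype.sum_prod_type]
  rfl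

theorem sum_flatMap_map {α β : Type} (l : List α) (g : α → List β) (F : β → ℤ) :
    ((l.flatMap g).map F).sum = (l.map (fun a => ((g a).map F).sum)).sum := by
  induction l with
  | nil => simp
  | cons a l ih => simp [List.flatMap_cons, ih]

theorem sum_mem_idx {r : ℕ} (vs : List (Fin r)) (hvs : vs.Nodup) (F : ℕ → ℤ) :
    ∑ x ∈ vs.toFinset, F (vs.idxOf x) = ((List.range vs.length).map F).sum := by
  rw [List.sum_toFinset _ hvs]
  congr 1
  apply List.ext_getElem
  · simp
  · intro i h1 h2
    simp at h1
    simp [hvs.idxOf_getElem]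

theorem enc_sum (r m : ℕ) : ∀ (vs : List (Fin r)), vs.Nodup → ∀ G : List ℕ → ℤ,
    ∑ f : Fin m → Fin r, G (enc vs (List.ofFn f)) =
      ((Wd m vs.length).map
        (fun p => (∏ i ∈ Finset.Ico vs.length p.2, ((r : ℤ) - i)) * G p.1)).sum := by
  induction m with
  | zero => intro vs hvs G; simp [Wd, enc]
  | succ m ih =>
    intro vs hvs G
    rw [sum_fun_succ]
    have h1 : ∀ x ∈ vs.toFinset,
        ∑ f : Fin m → Fin r, G (enc vs (List.ofFn (Fin.cons x f : Fin (m+1) → Fin r))) =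
          (fun j => ((Wd m vs.length).map (fun p =>
            (∏ i ∈ Finset.Ico vs.length p.2, ((r : ℤ) - i)) * G (j :: p.1))).sum)
            (vs.idxOf x) := by
      intro x hx
      have hx' : x ∈ vs := by simpa using hx
      simp only [List.ofFn_succ, Fin.cons_zero, Fin.cons_succ, enc, hx', if_true]
      exact ih vs hvs (fun w => G (vs.idxOf x :: w))
    have h2 : ∀ x ∈ vs.toFinsetᶜ,
        ∑ f : Fin m → Fin r, G (enc vs (List.ofFn (Fin.cons x f : Fin (m+1) → Fin r))) =
          ((Wd m (vs.length + 1)).map (fun p =>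
            (∏ i ∈ Finset.Ico (vs.length + 1) p.2, ((r : ℤ) - i)) *
              G (vs.length :: p.1))).sum := by
      intro x hx
      have hx' : x ∉ vs := by simpa using hx
      simp only [List.ofFn_succ, Fin.cons_zero, Fin.cons_succ, enc, hx', if_false]
      have hnd : (vs ++ [x]).Nodup := by
        rw [List.nodup_append]
        refine ⟨hvs, by simp, ?_⟩
        intro a ha b hb
        simp at hb
        subst hb
        rintro rfl
        exact hx' ha
      have := ih (vs ++ [x]) hnd (fun w => G (vs.length :: w))
      simpa using this
    rw [← Finset.sum_add_sum_compl vs.toFinset, Finset.sum_congr rfl h1,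
      Finset.sum_congr rfl h2, sum_mem_idx vs hvs (fun j => ((Wd m vs.length).map (fun p =>
            (∏ i ∈ Finset.Ico vs.length p.2, ((r : ℤ) - i)) * G (j :: p.1))).sum), Finset.sum_const, Finset.card_compl,
      List.toFinset_card_of_nodup hvs, Fintype.card_fin]
    have hle : vs.length ≤ r := by
      simpa using hvs.length_le_card
    rw [Wd, List.map_append, List.sum_append, sum_flatMap_map]
    congr 1
    · simp [Function.comp_def]
    · rw [nsmul_eq_mul, Nat.cast_sub hle, ← List.sum_map_mul_left, List.map_map]
      congr 1
      apply List.map_congr_left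
      intro p hp
      have := Wd_le m _ p hp
      simp only [Function.comp]
      rw [← mul_assoc, Finset.prod_eq_prod_Ico_succ_bot (by omega : vs.length < p.2)]

/-! ### Masks -/

/-- Bit mask recording which pairs of positions carry the same value. -/
def msk {α : Type} [DecidableEq α] (f : Fin 6 → α) : ℕ :=
  Nat.ofBits (fun k : Fin 36 => decide (k.val / 6 < k.val % 6 ∧
    f ⟨k.val / 6, by omega⟩ = f ⟨k.val % 6, by omega⟩))

/-- The mask of a word. -/
def mskL (w : List ℕ) : ℕ := msk (fun i : Fin 6 => w.getD i.val 0)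

theorem msk_land {α β : Type} [DecidableEq α] [DecidableEq β] (f : Fin 6 → α)
    (g : Fin 6 → β) :
    Nat.land (msk f) (msk g) = 0 ↔ ∀ i j, i ≠ j → ¬ (f i = f j ∧ g i = g j) := by
  change (msk f) &&& (msk g) = 0 ↔ _
  constructor
  · intro h
    have key : ∀ i j : Fin 6, i < j → ¬ (f i = f j ∧ g i = g j) := by
      intro i j hij ⟨h1, h2⟩
      have h3 := congrArg (fun x => Nat.testBit x (i.val * 6 + j.val)) h
      have hk : i.val * 6 + j.val < 36 := by omega
      have e1 : (i.val * 6 + j.val) / 6 = i.val := by omega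
      have e2 : (i.val * 6 + j.val) % 6 = j.val := by omega
      simp only [Nat.testBit_and, msk, Nat.testBit_ofBits_lt _ _ hk, e1, e2] at h3
      simp [h1, h2] at h3
      omega
    intro i j hij
    rcases lt_or_gt_of_ne hij with h' | h'
    · exact key i j h'
    · rintro ⟨h1, h2⟩
      exact key j i h' ⟨h1.symm, h2.symm⟩
  · intro h
    apply Nat.eq_of_testBit_eq
    intro k
    rw [Nat.testBit_and, Nat.zero_testBit]
    by_cases hk : k < 36
    · simp only [msk, Nat.testBit_ofBits_lt _ _ hk]
      by_contra hc
      rw [Bool.not_eq_false, Bool.and_eq_true, decide_eq_true_iff, decide_eq_true_iff] at hc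
      obtain ⟨⟨hl, h1⟩, _, h2⟩ := hc
      refine h ⟨k / 6, by omega⟩ ⟨k % 6, by omega⟩ ?_ ⟨h1, h2⟩
      intro he
      simp at he
      omega
    · simp only [msk, Nat.testBit_ofBits_ge _ _ (not_lt.mp hk), Bool.false_and]

theorem enc_eq_map {α : Type} [DecidableEq α] (l : List α) : ∀ vs : List α,
    ∃ u : List α, vs <+: u ∧ (∀ x ∈ l, x ∈ u) ∧ enc vs l = l.map (fun x => u.idxOf x) := by
  induction l with
  | nil => intro vs; exact ⟨vs, List.prefix_refl _, by simp, by simp [enc]⟩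
  | cons x l ih =>
    intro vs
    by_cases hx : x ∈ vs
    · obtain ⟨u, ⟨t, rfl⟩, h2, h3⟩ := ih vs
      refine ⟨vs ++ t, ⟨t, rfl⟩, ?_, ?_⟩
      · intro y hy
        rcases List.mem_cons.mp hy with rfl | hy
        · simp [hx]
        · exact h2 y hy
      · simp only [enc, hx, if_true, h3, List.map_cons, List.idxOf_append_of_mem hx]
    · obtain ⟨u, ⟨t, rfl⟩, h2, h3⟩ := ih (vs ++ [x])
      refine ⟨vs ++ [x] ++ t, ⟨[x] ++ t, by simp⟩, ?_, ?_⟩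
      · intro y hy
        rcases List.mem_cons.mp hy with rfl | hy
        · simp
        · exact h2 y hy
      · simp only [enc, hx, if_false, h3, List.map_cons]
        congr 1
        rw [List.append_assoc, List.idxOf_append_of_notMem hx]
        simp

theorem msk_enc {α : Type} [DecidableEq α] (f : Fin 6 → α) :
    mskL (enc [] (List.ofFn f)) = msk f := by
  obtain ⟨u, -, h2, h3⟩ := enc_eq_map (List.ofFn f) []
  have hu : ∀ i, f i ∈ u := fun i => h2 _ (by rw [List.mem_ofFn]; exact ⟨i, rfl⟩)
  have hg : ∀ i : Fin 6, (enc [] (List.ofFn f)).getD i.val 0 = u.idxOf (f i) := by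
    intro i
    rw [h3]
    simp [-List.ofFn_succ, List.getD]
  unfold mskL msk
  congr 1
  funext k
  have a1 := hg ⟨k.val / 6, by omega⟩
  have a2 := hg ⟨k.val % 6, by omega⟩
  simp only at a1 a2
  beta_reduce
  rw [a1, a2]
  simp only [List.idxOf_inj (hu _)]

/-! ### The list of partitions -/

def Lk : ℕ → List ℕ
  | 0 => []
  | 1 => [549687102]
  | 2 => [4294430, 8555310, 536904462, 537070902, 8455446, 4327718, 549454086, 549457466, 4326938, 8456746, 537068042, 536906802, 8553490, 4294690, 549683202, 549683260, 4294684, 8553516, 536906764, 537068084, 8456724, 4326948, 549457412, 549454136, 4327704, 8455464, 537070856, 536904496, 8555280, 4294432, 549687040]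
  | 3 => [33550, 66838, 4194566, 133414, 8388870, 536871174, 4195866, 66058, 8391210, 131594, 536871434, 33810, 4292610, 34850, 8552450, 536903682, 536874034, 132114, 8389650, 67618, 537067522, 8454146, 4196386, 4325378, 549453826, 4292636, 33804, 8552492, 34828, 536903692, 66068, 4195844, 131620, 8391172, 536871428, 537067572, 67604, 8454164, 132132, 536873988, 8389636, 4325412, 4196356, 549453828, 4194584, 66824, 8388904, 133384, 536871176, 33552, 4294400, 33568, 8555264, 536904448, 536871216, 133392, 8388880, 66848, 537070848, 8455424, 4194592, 4327680, 549454080, 549453880, 4196376, 4325400, 8389672, 536873992, 132104, 8454184, 67592, 537067528, 536871472, 8391184, 131600, 4195872, 549457408, 4326912, 66080, 8456704, 537068032, 536903728, 34832, 8552464, 33824, 536906752, 8553472, 4292640, 4294656, 549683200]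
  | 4 => [262, 522, 32770, 1042, 65538, 4194306, 2082, 131074, 8388610, 536870914, 32780, 516, 65556, 1028, 4194308, 131108, 2052, 8388612, 536870916, 264, 33536, 272, 66816, 4194560, 288, 133376, 8388864, 536871168, 4194328, 1032, 65544, 8388648, 2056, 131080, 536870920, 528, 4195840, 66048, 544, 8391168, 131584, 536871424, 32784, 33792, 4292608, 32800, 34816, 8552448, 536903680, 536870960, 2064, 131088, 8388624, 1056, 536873984, 132096, 8389632, 65568, 67584, 537067520, 8454144, 4194336, 4196352, 4325376, 549453824]
  | 5 => [2, 4, 256, 8, 512, 32768, 16, 1024, 65536, 4194304, 32, 2048, 131072, 8388608, 536870912]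
  | 6 => [0]
  | _ => []

def WM : List (ℕ × ℕ) := (Wd 6 0).map (fun p => (mskL p.1, p.2))

theorem Lk_eq : ∀ b < 7, (WM.filter (fun p => Nat.beq p.2 b)).map Prod.fst = Lk b := by
  decide +kernel

def ff (x : ℤ) (a : ℕ) : ℤ := ∏ i ∈ Finset.range a, (x - i)

theorem group_sum (h G : ℕ → ℤ) (l : List (ℕ × ℕ)) (hl : ∀ p ∈ l, p.2 < 7) :
    (l.map (fun p => h p.2 * G p.1)).sum =
      ∑ b ∈ Finset.range 7,
        h b * (((l.filter (fun p => Nat.beq p.2 b)).map Prod.fst).map G).sum := by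
  induction l with
  | nil => simp
  | cons p l ih =>
    have hp : p.2 < 7 := hl p (by simp)
    have e : ∀ b, h b * ((((p :: l).filter (fun p => Nat.beq p.2 b)).map Prod.fst).map G).sum
        = (if p.2 = b then h b * G p.1 else 0) +
          h b * (((l.filter (fun p => Nat.beq p.2 b)).map Prod.fst).map G).sum := by
      intro b
      by_cases hb : p.2 = b
      · rw [List.filter_cons_of_pos (by simp [hb])]
        simp [hb]; ring
      · rw [List.filter_cons_of_neg (by simp [hb])]
        simp [hb]
    rw [Finset.sum_congr rfl (fun b _ => e b), Finset.sum_add_distrib,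
      ← ih (fun q hq => hl q (by simp [hq])), Finset.sum_ite_eq]
    simp [hp]

theorem msk_sum (r : ℕ) (G : ℕ → ℤ) :
    ∑ f : Fin 6 → Fin r, G (msk f) =
      ∑ b ∈ Finset.range 7, ff r b * ((Lk b).map G).sum := by
  have h := enc_sum r 6 [] List.nodup_nil (fun w => G (mskL w))
  simp only [msk_enc] at h
  rw [h]
  have h2 := group_sum (ff r) G WM (by
    intro p hp
    simp only [WM, List.mem_map] at hp
    obtain ⟨q, hq, rfl⟩ := hp
    have := Wd_le' 6 0 q hq
    simp only; omega)
  rw [Finset.sum_congr rfl (fun b hb => by rw [Lk_eq b (Finset.mem_range.mp hb)])] at h2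
  rw [← h2, WM, List.map_map]
  simp only [Function.comp_def, ff, Finset.range_eq_Ico, List.length_nil]

/-! ### Counting compatible triples of partitions -/

def c1 (P Q : ℕ) : List ℕ → ℕ
  | [] => 0
  | R :: l => bif Nat.beq (Nat.land (Nat.lor P Q) R) 0 then Nat.succ (c1 P Q l) else c1 P Q l

def c2 (P : ℕ) (l' : List ℕ) : List ℕ → ℕ
  | [] => 0
  | Q :: l => bif Nat.beq (Nat.land P Q) 0 then Nat.add (c1 P Q l') (c2 P l' l) else c2 P l' l

def c3 (l' l'' : List ℕ) : List ℕ → ℕ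
  | [] => 0
  | P :: l => Nat.add (c2 P l'' l') (c3 l' l'' l)

def I3 (P Q R : ℕ) : ℤ :=
  if Nat.land P Q = 0 ∧ Nat.land P R = 0 ∧ Nat.land Q R = 0 then 1 else 0

def N3 (a b c : ℕ) : ℤ :=
  ((Lk a).map fun P => ((Lk b).map fun Q => ((Lk c).map fun R => I3 P Q R).sum).sum).sum

theorem land_lor_zero (P Q R : ℕ) :
    Nat.land (Nat.lor P Q) R = 0 ↔ Nat.land P R = 0 ∧ Nat.land Q R = 0 := by
  change (P ||| Q) &&& R = 0 ↔ P &&& R = 0 ∧ Q &&& R = 0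
  rw [Nat.and_or_distrib_right, Nat.or_eq_zero_iff]

theorem c1_eq (P Q : ℕ) (h : Nat.land P Q = 0) (l : List ℕ) :
    (c1 P Q l : ℤ) = (l.map fun R => I3 P Q R).sum := by
  induction l with
  | nil => simp [c1]
  | cons R l ih =>
    rw [List.map_cons, List.sum_cons, ← ih, c1]
    by_cases hR : Nat.land (Nat.lor P Q) R = 0
    · have h2 := (land_lor_zero P Q R).mp hR
      have : Nat.beq (Nat.land (Nat.lor P Q) R) 0 = true := by rw [hR]; rfl
      rw [this, I3, if_pos ⟨h, h2⟩]
      simp; ring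
    · have : Nat.beq (Nat.land (Nat.lor P Q) R) 0 = false := by
        rw [Bool.eq_false_iff]; exact fun hh => hR (Nat.eq_of_beq_eq_true hh)
      rw [this, I3, if_neg (fun hh => hR ((land_lor_zero P Q R).mpr hh.2))]
      simp

theorem c2_eq (P : ℕ) (l' l : List ℕ) :
    (c2 P l' l : ℤ) = (l.map fun Q => (l'.map fun R => I3 P Q R).sum).sum := by
  induction l with
  | nil => simp [c2]
  | cons Q l ih =>
    rw [List.map_cons, List.sum_cons, ← ih, c2]
    by_cases hQ : Nat.land P Q = 0
    · have : Nat.beq (Nat.land P Q) 0 = true := by rw [hQ]; rfl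
      rw [this, ← c1_eq P Q hQ]
      simp
    · have : Nat.beq (Nat.land P Q) 0 = false := by
        rw [Bool.eq_false_iff]; exact fun hh => hQ (Nat.eq_of_beq_eq_true hh)
      rw [this]
      have hz : ∀ R, I3 P Q R = 0 := fun R => if_neg (fun hh => hQ hh.1)
      simp only [hz, cond_false]
      simp

theorem c3_eq (l' l'' l : List ℕ) :
    (c3 l' l'' l : ℤ) =
      (l.map fun P => (l'.map fun Q => (l''.map fun R => I3 P Q R).sum).sum).sum := by
  induction l with
  | nil => simp [c3]
  | cons P l ih =>
    rw [List.map_cons, List.sum_cons, ← ih, ← c2_eq, c3]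
    simp

theorem list_sum_comm (l l' : List ℕ) (F : ℕ → ℕ → ℤ) :
    (l.map fun a => (l'.map fun b => F a b).sum).sum =
      (l'.map fun b => (l.map fun a => F a b).sum).sum := by
  induction l with
  | nil => simp
  | cons a l ih => simp [ih, List.sum_map_add]

theorem land_comm' (a b : ℕ) : Nat.land a b = Nat.land b a := Nat.and_comm a b

theorem N3_swap1 (a b c : ℕ) : N3 a b c = N3 b a c := by
  unfold N3
  rw [list_sum_comm]
  have e : ∀ P Q R : ℕ, I3 Q P R = I3 P Q R := by
    intro P Q R
    simp only [I3]
    rw [land_comm' Q P]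
    congr 1
    exact propext (by tauto)
  simp only [e]

theorem N3_swap2 (a b c : ℕ) : N3 a b c = N3 a c b := by
  unfold N3
  have e : ∀ P Q R : ℕ, I3 P R Q = I3 P Q R := by
    intro P Q R
    simp only [I3]
    rw [land_comm' R Q]
    congr 1
    exact propext (by tauto)
  congr 1
  apply List.map_congr_left
  intro P _
  rw [list_sum_comm]
  simp only [e]

def tab : List (List (List ℤ)) :=
  [[[0, 0, 0, 0, 0, 0, 0],
    [0, 0, 0, 0, 0, 0, 0],
    [0, 0, 0, 0, 0, 0, 0],
    [0, 0, 0, 0, 0, 0, 0],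
    [0, 0, 0, 0, 0, 0, 0],
    [0, 0, 0, 0, 0, 0, 0],
    [0, 0, 0, 0, 0, 0, 0]],
   [[0, 0, 0, 0, 0, 0, 0],
    [0, 0, 0, 0, 0, 0, 0],
    [0, 0, 0, 0, 0, 0, 0],
    [0, 0, 0, 0, 0, 0, 0],
    [0, 0, 0, 0, 0, 0, 0],
    [0, 0, 0, 0, 0, 0, 0],
    [0, 0, 0, 0, 0, 0, 1]],
   [[0, 0, 0, 0, 0, 0, 0],
    [0, 0, 0, 0, 0, 0, 0],
    [0, 0, 0, 0, 0, 0, 0],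
    [0, 0, 0, 120, 540, 360, 60],
    [0, 0, 0, 540, 3240, 2340, 360],
    [0, 0, 0, 360, 2340, 1680, 240],
    [0, 0, 0, 60, 360, 240, 31]],
   [[0, 0, 0, 0, 0, 0, 0],
    [0, 0, 0, 0, 0, 0, 0],
    [0, 0, 0, 120, 540, 360, 60],
    [0, 0, 120, 7680, 21120, 11880, 1560],
    [0, 0, 540, 21120, 47910, 23040, 2610],
    [0, 0, 360, 11880, 23040, 9660, 975],
    [0, 0, 60, 1560, 2610, 975, 90]],
   [[0, 0, 0, 0, 0, 0, 0],
    [0, 0, 0, 0, 0, 0, 0],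
    [0, 0, 0, 540, 3240, 2340, 360],
    [0, 0, 540, 21120, 47910, 23040, 2610],
    [0, 0, 3240, 47910, 76950, 29430, 2810],
    [0, 0, 2340, 23040, 29430, 9660, 825],
    [0, 0, 360, 2610, 2810, 825, 65]],
   [[0, 0, 0, 0, 0, 0, 0],
    [0, 0, 0, 0, 0, 0, 0],
    [0, 0, 0, 360, 2340, 1680, 240],
    [0, 0, 360, 11880, 23040, 9660, 975],
    [0, 0, 2340, 23040, 29430, 9660, 825],
    [0, 0, 1680, 9660, 9660, 2730, 210],
    [0, 0, 240, 975, 825, 210, 15]],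
   [[0, 0, 0, 0, 0, 0, 0],
    [0, 0, 0, 0, 0, 0, 1],
    [0, 0, 0, 60, 360, 240, 31],
    [0, 0, 60, 1560, 2610, 975, 90],
    [0, 0, 360, 2610, 2810, 825, 65],
    [0, 0, 240, 975, 825, 210, 15],
    [0, 1, 31, 90, 65, 15, 1]]]

def tb (a b c : ℕ) : ℤ := ((tab.getD a []).getD b []).getD c 0

theorem tb_sym : ∀ a < 7, ∀ b < 7, ∀ c < 7, tb a b c = tb b a c ∧ tb a b c = tb a c b := by
  decide +kernel

theorem tb_sorted : ∀ c < 7, ∀ b < c + 1, ∀ a < b + 1,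
    (c3 (Lk b) (Lk c) (Lk a) : ℤ) = tb a b c := by
  decide +kernel

theorem N3_sorted (a b c : ℕ) (h1 : a ≤ b) (h2 : b ≤ c) (h3 : c < 7) : N3 a b c = tb a b c := by
  rw [← tb_sorted c h3 b (by omega) a (by omega), c3_eq, N3]

theorem N3_eq (a b c : ℕ) (ha : a < 7) (hb : b < 7) (hc : c < 7) : N3 a b c = tb a b c := by
  have s1 : ∀ a b c, a < 7 → b < 7 → c < 7 → (N3 b a c = tb b a c) → N3 a b c = tb a b c := by
    intro a b c ha hb hc h
    rw [N3_swap1, h, (tb_sym a ha b hb c hc).1]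
  have s2 : ∀ a b c, a < 7 → b < 7 → c < 7 → (N3 a c b = tb a c b) → N3 a b c = tb a b c := by
    intro a b c ha hb hc h
    rw [N3_swap2, h, (tb_sym a ha b hb c hc).2]
  have k1 : ∀ a b c, a < 7 → b < 7 → c < 7 → a ≤ b → N3 a b c = tb a b c := by
    intro a b c ha hb hc hab
    rcases le_total b c with h | h
    · exact N3_sorted a b c hab h hc
    · apply s2 a b c ha hb hc
      rcases le_total a c with h' | h'
      · exact N3_sorted a c b h' h hb
      · apply s1 a c b ha hc hb
        exact N3_sorted c a b h' hab hb
  rcases le_total a b with h | h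
  · exact k1 a b c ha hb hc h
  · exact s1 a b c ha hb hc (k1 b a c hb ha hc h)

/-! ### Ordered tuples -/

theorem tuple_sum (r s n : ℕ) :
    ∑ f : Fin 6 → Fin r, ∑ g : Fin 6 → Fin s, ∑ h : Fin 6 → Fin n,
      I3 (msk f) (msk g) (msk h) =
    ∑ a ∈ Finset.range 7, ff r a * ∑ b ∈ Finset.range 7, ff s b *
      ∑ c ∈ Finset.range 7, ff n c * tb a b c := by
  have h1 : ∀ P Q, ∑ h : Fin 6 → Fin n, I3 P Q (msk h) =
      ∑ c ∈ Finset.range 7, ff n c * ((Lk c).map fun R => I3 P Q R).sum :=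
    fun P Q => msk_sum n (fun R => I3 P Q R)
  have h2 : ∀ P, ∑ g : Fin 6 → Fin s, ∑ h : Fin 6 → Fin n, I3 P (msk g) (msk h) =
      ∑ b ∈ Finset.range 7, ff s b * ((Lk b).map fun Q =>
        ∑ h : Fin 6 → Fin n, I3 P Q (msk h)).sum :=
    fun P => msk_sum s (fun Q => ∑ h : Fin 6 → Fin n, I3 P Q (msk h))
  have h3 := msk_sum r (fun P => ∑ g : Fin 6 → Fin s, ∑ h : Fin 6 → Fin n,
    I3 P (msk g) (msk h))
  rw [h3]
  have pull : ∀ (l : List ℕ) (F : ℕ → ℕ → ℤ) (w : ℕ → ℤ),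
      (l.map fun P => ∑ b ∈ Finset.range 7, w b * F b P).sum =
        ∑ b ∈ Finset.range 7, w b * (l.map (F b)).sum := by
    intro l F w
    induction l with
    | nil => simp
    | cons P l ih => simp only [List.map_cons, List.sum_cons, ih, mul_add,
        Finset.sum_add_distrib]
  apply Finset.sum_congr rfl
  intro a ha
  congr 1
  have h4 : ∀ P, ∑ g : Fin 6 → Fin s, ∑ h : Fin 6 → Fin n, I3 P (msk g) (msk h) =
      ∑ b ∈ Finset.range 7, ff s b * ∑ c ∈ Finset.range 7, ff n c *
        ((Lk b).map fun Q => ((Lk c).map fun R => I3 P Q R).sum).sum := by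
    intro P
    rw [h2]
    apply Finset.sum_congr rfl
    intro b _
    rw [← pull (Lk b) (fun c Q => ((Lk c).map fun R => I3 P Q R).sum) (fun c => ff n c)]
    simp only [h1]
  simp only [h4]
  rw [pull (Lk a) (fun b P => ∑ c ∈ Finset.range 7, ff n c *
        ((Lk b).map fun Q => ((Lk c).map fun R => I3 P Q R).sum).sum) (fun b => ff s b)]
  apply Finset.sum_congr rfl
  intro b hb
  congr 1
  rw [pull (Lk a) (fun c P => ((Lk b).map fun Q => ((Lk c).map fun R => I3 P Q R).sum).sum)
    (fun c => ff n c)]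
  apply Finset.sum_congr rfl
  intro c hc
  congr 1
  exact N3_eq a b c (Finset.mem_range.mp ha) (Finset.mem_range.mp hb) (Finset.mem_range.mp hc)

/-- Ordered partial Latin rectangles of size six. -/
def Good {r s n : ℕ} (t : Fin 6 → Fin r × Fin s × Fin n) : Prop :=
  ∀ i j, i ≠ j →
    ¬((t i).1 = (t j).1 ∧ (t i).2.1 = (t j).2.1) ∧
    ¬((t i).1 = (t j).1 ∧ (t i).2.2 = (t j).2.2) ∧
    ¬((t i).2.1 = (t j).2.1 ∧ (t i).2.2 = (t j).2.2)

theorem good_inj {r s n : ℕ} {t : Fin 6 → Fin r × Fin s × Fin n} (h : Good t) :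
    Function.Injective t := by
  intro i j hij
  by_contra hne
  exact (h i j hne).1 (by simp [hij])

theorem good_iff {r s n : ℕ} (t : Fin 6 → Fin r × Fin s × Fin n) :
    Good t ↔ IsPLR (univ.image t) ∧ (univ.image t).card = 6 := by
  constructor
  · intro h
    refine ⟨?_, ?_⟩
    · intro e he e' he' hne
      simp only [mem_image, mem_univ, true_and] at he he'
      obtain ⟨i, rfl⟩ := he
      obtain ⟨j, rfl⟩ := he'
      exact h i j (fun hij => hne (by rw [hij]))
    · rw [card_image_of_injective _ (good_inj h)]; simp
  · rintro ⟨h, hc⟩ i j hij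
    have hinj : Function.Injective t := by
      have : Set.InjOn t (univ : Finset (Fin 6)) := by
        apply Finset.injOn_of_card_image_eq
        rw [hc]; simp
      intro a b hab
      exact this (by simp) (by simp) hab
    exact h _ (by simp) _ (by simp) (fun e => hij (hinj e))

theorem fiber_card {τ : Type} [Fintype τ] [DecidableEq τ] (E : Finset τ) (hE : E.card = 6) :
    (univ.filter (fun t : Fin 6 → τ => univ.image t = E)).card = 720 := by
  have h1 : Fintype.card (Fin 6 ↪ E) = 720 := by
    rw [Fintype.card_embedding_eq, Fintype.card_coe, hE, Fintype.card_fin]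
    rfl
  rw [← h1, ← Finset.card_univ]
  symm
  apply Finset.card_bij (fun (e : Fin 6 ↪ E) _ => fun i => ((e i : E) : τ))
  · intro e _
    simp only [mem_filter, mem_univ, true_and]
    apply Finset.eq_of_subset_of_card_le
    · intro x hx
      simp only [mem_image, mem_univ, true_and] at hx
      obtain ⟨i, rfl⟩ := hx
      exact (e i).2
    · have hi : Function.Injective (fun i => ((e i : E) : τ)) :=
        Subtype.val_injective.comp e.injective
      rw [card_image_of_injective _ hi, hE]
      simp
  · intro e _ e' _ h
    ext i
    exact congrFun h i
  · intro t ht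
    simp only [mem_filter, mem_univ, true_and] at ht
    have hm : ∀ i, t i ∈ E := fun i => by rw [← ht]; simp
    have hinj : Function.Injective t := by
      have : Set.InjOn t (univ : Finset (Fin 6)) := by
        apply Finset.injOn_of_card_image_eq
        rw [ht, hE]; simp
      intro a b hab
      exact this (by simp) (by simp) hab
    refine ⟨⟨fun i => ⟨t i, hm i⟩, ?_⟩, mem_univ _, rfl⟩
    intro a b hab
    exact hinj (congrArg Subtype.val hab)

open Classical in
theorem numPLR_mul (r s n : ℕ) :
    720 * numPLR r s n 6 =
      (univ.filter (fun t : Fin 6 → Fin r × Fin s × Fin n => Good t)).card := by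
  have h1 : numPLR r s n 6 = (univ.filter
      (fun E : Finset (Fin r × Fin s × Fin n) => IsPLR E ∧ E.card = 6)).card := by
    rw [numPLR, Nat.card_eq_fintype_card, Fintype.card_subtype]
  rw [h1, Finset.card_eq_sum_card_fiberwise
    (f := fun t : Fin 6 → Fin r × Fin s × Fin n => univ.image t)
    (t := univ.filter (fun E : Finset (Fin r × Fin s × Fin n) => IsPLR E ∧ E.card = 6))]
  · rw [Finset.sum_congr rfl (g := fun _ => 720), Finset.sum_const, smul_eq_mul, mul_comm]
    intro E hE
    simp only [mem_filter, mem_univ, true_and] at hE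
    rw [← fiber_card E hE.2]
    congr 1
    ext t
    simp only [mem_filter, mem_univ, true_and]
    constructor
    · exact fun h => h.2
    · intro h
      refine ⟨?_, h⟩
      rw [good_iff, h]
      exact hE
  · intro t ht
    have ht' : Good t := by simpa using ht
    simpa using (good_iff t).mp ht'

open Classical in
theorem good_card (r s n : ℕ) :
    ((univ.filter (fun t : Fin 6 → Fin r × Fin s × Fin n => Good t)).card : ℤ) =
    ∑ f : Fin 6 → Fin r, ∑ g : Fin 6 → Fin s, ∑ h : Fin 6 → Fin n,
      I3 (msk f) (msk g) (msk h) := by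
  let e : ((Fin 6 → Fin r) × (Fin 6 → Fin s) × (Fin 6 → Fin n)) ≃
      (Fin 6 → Fin r × Fin s × Fin n) :=
    { toFun := fun p i => (p.1 i, p.2.1 i, p.2.2 i)
      invFun := fun t => (fun i => (t i).1, fun i => (t i).2.1, fun i => (t i).2.2)
      left_inv := fun _ => rfl
      right_inv := fun _ => rfl }
  rw [Finset.card_filter]
  push_cast
  rw [← e.sum_comp, Fintype.sum_prod_type]
  simp only [Fintype.sum_prod_type]
  refine Finset.sum_congr rfl fun f _ => Finset.sum_congr rfl fun g _ =>
    Finset.sum_congr rfl fun h _ => ?_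
  rw [I3]
  congr 1
  apply propext
  rw [msk_land, msk_land, msk_land]
  constructor
  · intro hg
    exact ⟨fun i j hij => (hg i j hij).1, fun i j hij => (hg i j hij).2.1,
      fun i j hij => (hg i j hij).2.2⟩
  · rintro ⟨h1, h2, h3⟩ i j hij
    exact ⟨h1 i j hij, h2 i j hij, h3 i j hij⟩

theorem sig_aaa (r s n : ℤ) (a : ℕ) : sig r s n a a a = r ^ a * s ^ a * n ^ a := by
  simp [sig]

theorem sig_aab (r s n : ℤ) (a b : ℕ) (h : a ≠ b) : sig r s n a a b =
    r ^ a * s ^ a * n ^ b + r ^ a * s ^ b * n ^ a + r ^ b * s ^ a * n ^ a := by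
  simp [sig, Finset.sum_insert, h, h.symm]
  ring

theorem sig_abb (r s n : ℤ) (a b : ℕ) (h : a ≠ b) : sig r s n a b b =
    r ^ a * s ^ b * n ^ b + r ^ b * s ^ a * n ^ b + r ^ b * s ^ b * n ^ a := by
  simp [sig, Finset.sum_insert, h, h.symm]
  ring

theorem sig_abc (r s n : ℤ) (a b c : ℕ) (h : a ≠ b) (h' : a ≠ c) (h'' : b ≠ c) :
    sig r s n a b c =
    r ^ a * s ^ b * n ^ c + r ^ a * s ^ c * n ^ b + r ^ b * s ^ a * n ^ c +
    r ^ b * s ^ c * n ^ a + r ^ c * s ^ a * n ^ b + r ^ c * s ^ b * n ^ a := by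
  simp [sig, Finset.sum_insert, h, h.symm, h', h'.symm, h'', h''.symm]
  ring

theorem stmt8 (r s n : ℕ) (hr : 0 < r) (hs : 0 < s) (hn : 0 < n) :
    (720 : ℤ) * numPLR r s n 6 =
      (r : ℤ) * s * n *
        (sig r s n 5 5 5 - 15 * sig r s n 5 4 4 + 30 * sig r s n 4 4 4
          + 85 * sig r s n 5 3 3 + 210 * sig r s n 4 4 3 - 420 * sig r s n 4 3 3
          - 225 * sig r s n 5 2 2 - 1065 * sig r s n 4 3 2 - 2150 * sig r s n 3 3 3
          + 2130 * sig r s n 4 2 2 + 5310 * sig r s n 3 3 2 + 274 * sig r s n 5 1 1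
          + 2310 * sig r s n 4 2 1 + 4400 * sig r s n 3 3 1 + 4800 * sig r s n 3 2 2
          - 4620 * sig r s n 4 1 1 - 22170 * sig r s n 3 2 1 - 49500 * sig r s n 2 2 2
          - 120 * sig r s n 5 0 0 - 1800 * sig r s n 4 1 0 - 6000 * sig r s n 3 2 0
          + 10460 * sig r s n 3 1 1 + 34980 * sig r s n 2 2 1 + 3600 * sig r s n 4 0 0
          + 30600 * sig r s n 3 1 0 + 58440 * sig r s n 2 2 0 + 88710 * sig r s n 2 1 1
          - 34800 * sig r s n 3 0 0 - 165480 * sig r s n 2 1 0 - 364268 * sig r s n 1 1 1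
          + 140040 * sig r s n 2 0 0 + 344520 * sig r s n 1 1 0 - 240720 * sig r s n 1 0 0
          + 146400) := by
  have h0 : (720 : ℤ) * numPLR r s n 6 = ((720 * numPLR r s n 6 : ℕ) : ℤ) := by push_cast; rfl
  classical
  rw [h0, numPLR_mul, good_card, tuple_sum]
  generalize (r : ℤ) = x
  generalize (s : ℤ) = y
  generalize (n : ℤ) = z
  have e0 : ∀ x : ℤ, ff x 0 = 1 := fun x => by simp [ff]
  have e1 : ∀ x : ℤ, ff x 1 = x := fun x => by simp [ff]
  have e2 : ∀ x : ℤ, ff x 2 = x^2 - x := fun x => by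
    simp [ff, Finset.prod_range_succ]; ring
  have e3 : ∀ x : ℤ, ff x 3 = x^3 - 3*x^2 + 2*x := fun x => by
    simp [ff, Finset.prod_range_succ]; ring
  have e4 : ∀ x : ℤ, ff x 4 = x^4 - 6*x^3 + 11*x^2 - 6*x := fun x => by
    simp [ff, Finset.prod_range_succ]; ring
  have e5 : ∀ x : ℤ, ff x 5 = x^5 - 10*x^4 + 35*x^3 - 50*x^2 + 24*x := fun x => by
    simp [ff, Finset.prod_range_succ]; ring
  have e6 : ∀ x : ℤ, ff x 6 = x^6 - 15*x^5 + 85*x^4 - 225*x^3 + 274*x^2 - 120*x := fun x => by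
    simp [ff, Finset.prod_range_succ]; ring
  simp only [Finset.sum_range_succ, Finset.sum_range_zero, e0, e1, e2, e3, e4, e5, e6, tb, tab,
    List.getD_cons_zero, List.getD_cons_succ, zero_add, mul_zero, add_zero]
  rw [sig_aaa _ _ _ 5, sig_aaa _ _ _ 4, sig_aaa _ _ _ 3, sig_aaa _ _ _ 2, sig_aaa _ _ _ 1]
  simp (disch := decide) only [sig_aab, sig_abb, sig_abc]
  ring
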